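/- Let κ be a cardinal number. There exist a lattice L and a maximal congruence μ of L such that the quotient L/μ has cardinality κ if and only if κ = 2 or κ ≥ 5. -/

import Mathlib

/-- A lattice congruence: an equivalence relation compatible with `⊔` and `⊓`. -/
def IsLatCon {L : Type*} [Lattice L] (θ : L → L → Prop) : Prop :=
  Equivalence θ ∧ (∀ a b c d, θ a b → θ c d → θ (a ⊔ c) (b ⊔ d)) ∧
    (∀ a b c d, θ a b → θ c d → θ (a ⊓ c) (b ⊓ d))

/-- A maximal congruence: a maximal element of the proper congruences under inclusion. -/
def IsMaxCon {L : Type*} [Lattice L] (θ : L → L → Prop) : Prop :=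
  IsLatCon θ ∧ θ ≠ (fun _ _ => True) ∧
    ∀ φ : L → L → Prop, IsLatCon φ → (∀ a b, θ a b → φ a b) →
      φ = θ ∨ φ = (fun _ _ => True)

/-- A prime congruence: proper, and `α ∩ β ⊆ θ` implies `α ⊆ θ` or `β ⊆ θ`. -/
def IsPrimeCon {L : Type*} [Lattice L] (θ : L → L → Prop) : Prop :=
  IsLatCon θ ∧ θ ≠ (fun _ _ => True) ∧
    ∀ α β : L → L → Prop, IsLatCon α → IsLatCon β →
      (∀ a b, α a b → β a b → θ a b) →
      (∀ a b, α a b → θ a b) ∨ (∀ a b, β a b → θ a b)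

universe u

inductive MLat (A : Type*) : Type _
  | bot : MLat A
  | top : MLat A
  | atom : A → MLat A

namespace MLat
open Classical in
noncomputable instance instLat (A : Type*) : Lattice (MLat A) where
  le x y := x = bot ∨ y = top ∨ x = y
  le_refl x := by simp
  le_trans x y z h1 h2 := by
    cases x <;> cases y <;> cases z <;> simp_all
  le_antisymm x y h1 h2 := by
    cases x <;> cases y <;> simp_all
  sup x y := if x = bot then y else if y = bot then x else if x = y then x else top
  inf x y := if x = top then y else if y = top then x else if x = y then x else bot
  le_sup_left x y := by
    cases x <;> cases y <;> simp; grind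
  le_sup_right x y := by
    cases x <;> cases y <;> simp; grind
  sup_le x y z h1 h2 := by
    cases x <;> cases y <;> cases z <;> simp_all
  inf_le_left x y := by
    cases x <;> cases y <;> simp; grind
  inf_le_right x y := by
    cases x <;> cases y <;> simp; grind
  le_inf x y z h1 h2 := by
    cases x <;> cases y <;> cases z <;> simp_all

variable {A : Type*}

theorem bot_sup (x : MLat A) : bot ⊔ x = x := by
  classical
  change @ite _ _ (Classical.propDecidable _) _ _ = _
  simp
theorem top_inf (x : MLat A) : top ⊓ x = x := by
  classical
  change @ite _ _ (Classical.propDecidable _) _ _ = _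
  simp
theorem bot_inf (x : MLat A) : bot ⊓ x = bot := by
  classical
  change @ite _ _ (Classical.propDecidable _) _ _ = _
  cases x <;> simp
theorem top_sup (x : MLat A) : top ⊔ x = top := by
  classical
  change @ite _ _ (Classical.propDecidable _) _ _ = _
  cases x <;> simp
theorem atom_sup {a b : A} (h : a ≠ b) : (atom a ⊔ atom b : MLat A) = top := by
  classical
  change @ite _ _ (Classical.propDecidable _) _ _ = _
  simp [h]
theorem atom_inf {a b : A} (h : a ≠ b) : (atom a ⊓ atom b : MLat A) = bot := by
  classical
  change @ite _ _ (Classical.propDecidable _) _ _ = _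
  simp [h]

theorem simple (hA : ∀ a b : A, ∃ c, c ≠ a ∧ c ≠ b) (φ : MLat A → MLat A → Prop)
    (h : IsLatCon φ) (x y : MLat A) (hxy : φ x y) (hne : x ≠ y) : φ = fun _ _ => True := by
  obtain ⟨he, hs, hi⟩ := h
  have H0 : φ bot top → φ = fun _ _ => True := by
    intro h0
    have : ∀ z, φ bot z := by
      intro z
      have := hi _ _ _ _ h0 (he.refl z)
      rwa [bot_inf, top_inf] at this
    funext z w
    exact eq_true (he.trans (he.symm (this z)) (this w))
  have S : ∀ a b : A, a ≠ b → φ bot (atom a) → φ (atom b) top := by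
    intro a b hab h1
    have := hs _ _ _ _ h1 (he.refl (atom b))
    rwa [bot_sup, atom_sup hab] at this
  have I : ∀ a b : A, a ≠ b → φ (atom a) top → φ bot (atom b) := by
    intro a b hab h1
    have := hi _ _ _ _ h1 (he.refl (atom b))
    rwa [top_inf, atom_inf hab] at this
  have H1 : ∀ a, φ bot (atom a) → φ = fun _ _ => True := by
    intro a ha
    obtain ⟨b, hb, -⟩ := hA a a
    obtain ⟨c, hc, hcb⟩ := hA a b
    exact H0 (he.trans ha (S c a hc (I b c hcb.symm (S a b hb.symm ha))))
  have H2 : ∀ a, φ (atom a) top → φ = fun _ _ => True := by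
    intro a ha
    obtain ⟨b, hb, -⟩ := hA a a
    exact H1 b (I a b hb.symm ha)
  rcases x with _ | _ | a <;> rcases y with _ | _ | b
  · exact absurd rfl hne
  · exact H0 hxy
  · exact H1 _ hxy
  · exact H0 (he.symm hxy)
  · exact absurd rfl hne
  · exact H2 _ (he.symm hxy)
  · exact H1 _ (he.symm hxy)
  · exact H2 _ hxy
  · have hab : a ≠ b := fun h => hne (by rw [h])
    have := hi _ _ _ _ hxy (he.refl (atom b))
    rw [atom_inf hab, inf_idem] at this
    exact H1 _ this

def equivOpt (A : Type*) : MLat A ≃ Option (Option A) where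
  toFun x := match x with
    | bot => none
    | top => some none
    | atom a => some (some a)
  invFun x := match x with
    | none => bot
    | some none => top
    | some (some a) => atom a
  left_inv x := by rcases x with _ | _ | a <;> rfl
  right_inv x := by rcases x with _ | _ | a <;> rfl

end MLat

theorem isLatCon_eq {L : Type*} [Lattice L] : IsLatCon (fun a b : L => a = b) :=
  ⟨⟨fun _ => rfl, fun h => h.symm, fun h1 h2 => h1.trans h2⟩,
   fun _ _ _ _ h1 h2 => by rw [h1, h2], fun _ _ _ _ h1 h2 => by rw [h1, h2]⟩

theorem isMaxCon_eq {L : Type*} [Lattice L] (x y : L) (hxy : x ≠ y)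
    (H : ∀ φ : L → L → Prop, IsLatCon φ → ∀ x y, φ x y → x ≠ y → φ = fun _ _ => True) :
    IsMaxCon (fun a b : L => a = b) := by
  refine ⟨isLatCon_eq, fun h => hxy ?_, fun φ hφ _ => ?_⟩
  · have := congrFun (congrFun h x) y
    exact of_eq_true this
  · by_cases h : ∃ x y, φ x y ∧ x ≠ y
    · obtain ⟨x, y, h1, h2⟩ := h
      exact Or.inr (H φ hφ x y h1 h2)
    · left
      funext x y
      apply propext
      constructor
      · intro hh
        by_contra hn
        exact h ⟨x, y, hh, hn⟩
      · rintro rfl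
        exact hφ.1.refl _

def quotEqEquiv (L : Type*) : Quot (fun a b : L => a = b) ≃ L where
  toFun := Quot.lift id (fun _ _ h => h)
  invFun := Quot.mk _
  left_inv := by rintro ⟨x⟩; rfl
  right_inv x := rfl

theorem distrib_simple {Q : Type*} [DistribLattice Q]
    (H : ∀ φ : Q → Q → Prop, IsLatCon φ → φ = (fun a b => a = b) ∨ φ = fun _ _ => True)
    (a : Q) : IsBot a ∨ IsTop a := by
  have h1 : IsLatCon (fun x y : Q => x ⊔ a = y ⊔ a) := by
    refine ⟨⟨fun _ => rfl, fun h => h.symm, fun h1 h2 => h1.trans h2⟩, ?_, ?_⟩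
    · intro x y z w h1 h2
      rw [sup_sup_distrib_right, h1, h2, ← sup_sup_distrib_right]
    · intro x y z w h1 h2
      rw [sup_inf_right, h1, h2, ← sup_inf_right]
  rcases H _ h1 with h | h
  · left
    intro x
    have := congrFun (congrFun h a) (a ⊓ x)
    simp only [sup_idem, inf_sup_self, eq_iff_iff] at this
    have h2 : a = a ⊓ x := this.1 (by simp [sup_comm])
    rw [h2]
    exact inf_le_right
  · right
    intro x
    have h2 : x ⊔ a = a ⊔ a := of_eq_true (congrFun (congrFun h x) a)
    rw [sup_idem] at h2
    exact sup_eq_right.1 h2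

theorem distrib_or_five {Q : Type*} [Lattice Q] :
    (∀ x y z : Q, x ⊓ (y ⊔ z) ≤ x ⊓ y ⊔ x ⊓ z) ∨ ∃ f : Fin 5 → Q, Function.Injective f := by
  by_cases h : ∀ x y z : Q, x ⊓ (y ⊔ z) ≤ x ⊓ y ⊔ x ⊓ z
  · exact Or.inl h
  right
  push Not at h
  obtain ⟨x, y, z, h⟩ := h
  have hyz : ¬ y ≤ z := fun hh => h (by rw [sup_eq_right.2 hh]; exact le_sup_right)
  have hzy : ¬ z ≤ y := fun hh => h (by rw [sup_eq_left.2 hh]; exact le_sup_left)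
  have hxy : ¬ x ≤ y := fun hh => h (by
    rw [inf_eq_left.2 hh]; exact inf_le_left.trans le_sup_left)
  have hxz : ¬ x ≤ z := fun hh => h (by
    rw [inf_eq_left.2 hh]; exact inf_le_left.trans le_sup_right)
  have hx : x ≠ y ⊔ z := fun hh => h (by subst hh; simp [sup_comm, inf_sup_self])
  have hx2 : x ≠ y ⊓ z := fun hh => hxy (hh ▸ inf_le_left)
  have e1 : x ≠ y := fun hh => hxy hh.le
  have e2 : x ≠ z := fun hh => hxz hh.le
  have e3 : y ≠ z := fun hh => hyz hh.le
  have e4 : y ≠ y ⊓ z := fun hh => hyz (inf_eq_left.1 hh.symm)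
  have e5 : z ≠ y ⊓ z := fun hh => hzy (inf_eq_right.1 hh.symm)
  have e6 : y ≠ y ⊔ z := fun hh => hzy (sup_eq_left.1 hh.symm)
  have e7 : z ≠ y ⊔ z := fun hh => hyz (sup_eq_right.1 hh.symm)
  have e8 : y ⊓ z ≠ y ⊔ z := fun hh => hyz (by
    have : y ≤ y ⊓ z := hh ▸ le_sup_left
    exact this.trans inf_le_right)
  refine ⟨![x, y, z, y ⊓ z, y ⊔ z], ?_⟩
  intro i j hij
  fin_cases i <;> fin_cases j <;> first
    | rfl
    | (exfalso; simp only [] at hij; first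
        | exact hx hij | exact hx2 hij | exact e1 hij | exact e2 hij | exact e3 hij
        | exact e4 hij | exact e5 hij | exact e6 hij | exact e7 hij | exact e8 hij
        | exact hx hij.symm | exact hx2 hij.symm | exact e1 hij.symm | exact e2 hij.symm
        | exact e3 hij.symm | exact e4 hij.symm | exact e5 hij.symm | exact e6 hij.symm
        | exact e7 hij.symm | exact e8 hij.symm)

theorem simple_card {Q : Type u} [Lattice Q] (x y : Q) (hxy : x ≠ y)
    (H : ∀ φ : Q → Q → Prop, IsLatCon φ → φ = (fun a b => a = b) ∨ φ = fun _ _ => True) :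
    Cardinal.mk Q = 2 ∨ 5 ≤ Cardinal.mk Q := by
  rcases distrib_or_five (Q := Q) with h | ⟨f, hf⟩
  · left
    have key : ∀ a : Q, IsBot a ∨ IsTop a :=
      letI D : DistribLattice Q := DistribLattice.ofInfSupLe h
      distrib_simple (Q := Q) H
    rw [Cardinal.mk_eq_two_iff]
    refine ⟨x, y, hxy, ?_⟩
    ext z
    simp only [Set.mem_insert_iff, Set.mem_singleton_iff, Set.mem_univ, iff_true]
    have hb : ∀ a b : Q, IsBot a → IsBot b → a = b := fun a b h1 h2 => le_antisymm (h1 b) (h2 a)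
    have ht : ∀ a b : Q, IsTop a → IsTop b → a = b := fun a b h1 h2 => le_antisymm (h2 a) (h1 b)
    rcases key x with h1 | h1 <;> rcases key y with h2 | h2 <;> rcases key z with h3 | h3
    · exact Or.inl (hb _ _ h3 h1)
    · exact absurd (hb _ _ h1 h2) hxy
    · exact Or.inl (hb _ _ h3 h1)
    · exact Or.inr (ht _ _ h3 h2)
    · exact Or.inr (hb _ _ h3 h2)
    · exact Or.inl (ht _ _ h3 h1)
    · exact absurd (ht _ _ h1 h2) hxy
    · exact Or.inl (ht _ _ h3 h1)
  · right
    have := Cardinal.mk_le_of_injective (α := ULift.{u} (Fin 5)) (f := fun i => f i.down)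
      (fun i j hij => ULift.down_injective (hf hij))
    simpa using this

abbrev quotLat {L : Type*} [Lattice L] (μ : L → L → Prop) (h : IsLatCon μ) : Lattice (Quot μ) :=
  letI : Max (Quot μ) := ⟨Quot.map₂ (· ⊔ ·)
    (fun a _ _ hb => h.2.1 _ _ _ _ (h.1.refl a) hb) (fun _ _ c ha => h.2.1 _ _ _ _ ha (h.1.refl c))⟩
  letI : Min (Quot μ) := ⟨Quot.map₂ (· ⊓ ·)
    (fun a _ _ hb => h.2.2 _ _ _ _ (h.1.refl a) hb) (fun _ _ c ha => h.2.2 _ _ _ _ ha (h.1.refl c))⟩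
  Lattice.mk'
    (by rintro ⟨a⟩ ⟨b⟩; exact congrArg (Quot.mk μ) (sup_comm a b))
    (by rintro ⟨a⟩ ⟨b⟩ ⟨c⟩; exact congrArg (Quot.mk μ) (sup_assoc a b c))
    (by rintro ⟨a⟩ ⟨b⟩; exact congrArg (Quot.mk μ) (inf_comm a b))
    (by rintro ⟨a⟩ ⟨b⟩ ⟨c⟩; exact congrArg (Quot.mk μ) (inf_assoc a b c))
    (by rintro ⟨a⟩ ⟨b⟩; exact congrArg (Quot.mk μ) (sup_inf_self (a := a) (b := b)))
    (by rintro ⟨a⟩ ⟨b⟩; exact congrArg (Quot.mk μ) (inf_sup_self (a := a) (b := b)))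

theorem maxCon_card {L : Type u} [Lattice L] (μ : L → L → Prop) (h : IsMaxCon μ) :
    Cardinal.mk (Quot μ) = 2 ∨ 5 ≤ Cardinal.mk (Quot μ) := by
  obtain ⟨hc, hp, hm⟩ := h
  letI := quotLat μ hc
  have hex : ∃ a b, ¬ μ a b := by
    by_contra hn
    push Not at hn
    exact hp (by funext a b; exact eq_true (hn a b))
  have hmk : ∀ a b, Quot.mk μ a = Quot.mk μ b ↔ μ a b := fun a b => by
    rw [Quot.eq, hc.1.eqvGen_iff]
  obtain ⟨a, b, hab⟩ := hex
  refine simple_card (Quot.mk μ a) (Quot.mk μ b) (fun hh => hab ((hmk _ _).1 hh)) ?_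
  intro φ hφ
  have hψ : IsLatCon (fun a b => φ (Quot.mk μ a) (Quot.mk μ b)) :=
    ⟨⟨fun _ => hφ.1.refl _, fun h => hφ.1.symm h, fun h1 h2 => hφ.1.trans h1 h2⟩,
      fun _ _ _ _ h1 h2 => hφ.2.1 _ _ _ _ h1 h2, fun _ _ _ _ h1 h2 => hφ.2.2 _ _ _ _ h1 h2⟩
  rcases hm _ hψ (fun a b hh => by rw [(hmk a b).2 hh]; exact hφ.1.refl _) with h | h
  · left
    funext p q
    induction p using Quot.ind
    induction q using Quot.ind
    rw [hmk]
    exact congrFun (congrFun h _) _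
  · right
    funext p q
    induction p using Quot.ind
    induction q using Quot.ind
    exact congrFun (congrFun h _) _


/-- There exist a lattice and a maximal congruence of it whose quotient
has cardinality κ iff κ = 2 or κ ≥ 5. -/
theorem exists_lattice_maxCon_card_iff (κ : Cardinal.{u}) :
    (∃ (L : Type u) (inst : Lattice L) (μ : L → L → Prop),
        @IsMaxCon L inst μ ∧ Cardinal.mk (Quot μ) = κ) ↔ (κ = 2 ∨ 5 ≤ κ) := by
  constructor
  · rintro ⟨L, inst, μ, h, rfl⟩
    exact maxCon_card μ h
  · rintro (rfl | h)
    · refine ⟨ULift.{u} Bool, inferInstance, fun a b => a = b,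
        isMaxCon_eq ⟨false⟩ ⟨true⟩ (by simp) ?_, ?_⟩
      · rintro φ hφ ⟨x⟩ ⟨y⟩ h hne
        have e := hφ.1
        funext ⟨z⟩ ⟨w⟩
        apply eq_true
        have r := e.refl
        have h' := e.symm h
        cases x <;> cases y <;> first
          | exact absurd rfl hne
          | (cases z <;> cases w <;> first | exact h | exact h' | exact r _)
      · rw [Cardinal.mk_congr (quotEqEquiv _)]
        simp
    · obtain ⟨c, rfl⟩ := exists_add_of_le h
      refine ⟨MLat (ULift.{u} (Fin 3) ⊕ c.out), inferInstance, fun a b => a = b,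
        isMaxCon_eq MLat.bot MLat.top (by simp) (MLat.simple ?_), ?_⟩
      · intro a b
        have : ∀ i j : Option (Fin 3), ∃ k : Fin 3, some k ≠ i ∧ some k ≠ j := by decide
        obtain ⟨k, h1, h2⟩ := this (a.elim (fun i => some i.down) fun _ => none)
          (b.elim (fun i => some i.down) fun _ => none)
        exact ⟨Sum.inl ⟨k⟩, by rintro rfl; exact h1 rfl, by rintro rfl; exact h2 rfl⟩
      · rw [Cardinal.mk_congr (quotEqEquiv _), Cardinal.mk_congr (MLat.equivOpt _)]
        simp only [Cardinal.mk_option, Cardinal.mk_sum, Cardinal.mk_uLift, Cardinal.mk_fin,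
          Cardinal.lift_id, Cardinal.mk_out, Cardinal.lift_natCast]
        rw [add_comm _ c, add_assoc, add_assoc, add_comm]
        norm_num
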